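/- arXiv:1310.7677 — 3 statements merged into one kernel-verified Lean document; each statement's English description precedes it below -/
import Mathlib

section
/- Under the CFL-type condition Δt/h^α ≤ 1/(2 ε C_α (1 + 1/α − ζ(α−1))), the explicit Euler scheme for the absorbing condition satisfies the discrete maximum principle: if M ≥ 0 and 0 ≤ P^0_j ≤ M for all j ∈ ℤ (with P^0_j = 0 for |j| ≥ J), then for every n ≥ 0 and every j ∈ ℤ one has 0 ≤ P^n_j ≤ M. -/
open scoped BigOperators

/-- The constant `C_α = α Γ((1+α)/2) / (2^{1-α} √π Γ(1-α/2))`. -/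
noncomputable def Cconst (α : ℝ) : ℝ :=
  α * Real.Gamma ((1 + α) / 2) /
    ((2 : ℝ) ^ (1 - α) * Real.sqrt Real.pi * Real.Gamma (1 - α / 2))

/-- The real value of the Riemann zeta function at a real argument. -/
noncomputable def zetaR (s : ℝ) : ℝ := (riemannZeta (s : ℂ)).re

/-- The double-primed sum `Σ''_{k=a, k≠0}^{b} g(k)`: the sum over integers `a ≤ k ≤ b`,
omitting `k = 0`, where the end terms `k = a` and `k = b` carry weight `1/2`. -/
noncomputable def dsum (a b : ℤ) (g : ℤ → ℝ) : ℝ :=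
  ∑ k ∈ (Finset.Icc a b).erase 0, (if k = a ∨ k = b then (1 : ℝ) / 2 else 1) * g k


noncomputable def zfr (t : ℝ) : ℂ := Set.indicator (Set.Ioi (1:ℝ)) (fun t : ℝ => ((t - (⌊t⌋₊ : ℝ) : ℝ) : ℂ)) t

lemma zfr_meas : Measurable zfr := by
  unfold zfr
  refine Measurable.indicator ?_ measurableSet_Ioi
  refine Complex.measurable_ofReal.comp ?_
  refine measurable_id.sub ?_
  exact (measurable_from_top (f := fun n : ℕ => (n : ℝ))).comp Nat.measurable_floor

lemma zfr_norm (t : ℝ) : ‖zfr t‖ ≤ 1 := by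
  unfold zfr
  by_cases h : t ∈ Set.Ioi (1:ℝ)
  · rw [Set.indicator_of_mem h, Complex.norm_real, Real.norm_eq_abs, abs_le]
    have h1 : (1:ℝ) < t := h
    have := Nat.floor_le (show 0 ≤ t by linarith)
    have := Nat.lt_floor_add_one t
    constructor <;> linarith
  · rw [Set.indicator_of_notMem h]; simp

lemma zfr_diff {s : ℂ} (hs : 0 < s.re) : DifferentiableAt ℂ (fun s => mellin zfr (-s)) s := by
  have : DifferentiableAt ℂ (mellin zfr) (-s) := by
    refine mellin_differentiableAt_of_isBigO_rpow (a := 0) (b := (-s).re - 1) ?_ ?_ (by simpa using hs) ?_ (by linarith)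
    · refine MeasureTheory.LocallyIntegrable.locallyIntegrableOn ?_ _
      refine (MeasureTheory.locallyIntegrable_const (1:ℝ)).mono zfr_meas.aestronglyMeasurable ?_
      filter_upwards with t
      simpa using zfr_norm t
    · refine Asymptotics.IsBigO.of_bound 1 ?_
      filter_upwards with t
      simpa using zfr_norm t
    · refine Asymptotics.IsBigO.of_bound 1 ?_
      have : Set.Iio (1:ℝ) ∈ nhdsWithin (0:ℝ) (Set.Ioi 0) :=
        mem_nhdsWithin_of_mem_nhds (Iio_mem_nhds one_pos)
      filter_upwards [this] with t ht
      have : zfr t = 0 := by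
        unfold zfr
        rw [Set.indicator_of_notMem]
        simp only [Set.mem_Ioi, not_lt]; exact le_of_lt ht
      rw [this]; simp
  exact this.comp s differentiableAt_id.neg

lemma zfr_mellin (s : ℂ) : mellin zfr (-s) =
    ∫ t in Set.Ioi (1:ℝ), ((t - (⌊t⌋₊ : ℝ) : ℝ) : ℂ) * (t:ℂ) ^ (-(s+1)) := by
  unfold mellin
  have : ∀ t : ℝ, (t:ℂ) ^ (-s - 1) • zfr t =
      Set.indicator (Set.Ioi (1:ℝ)) (fun t : ℝ => ((t - (⌊t⌋₊ : ℝ) : ℝ) : ℂ) * (t:ℂ) ^ (-(s+1))) t := by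
    intro t
    unfold zfr
    by_cases h : t ∈ Set.Ioi (1:ℝ)
    · rw [Set.indicator_of_mem h, Set.indicator_of_mem h, smul_eq_mul, mul_comm, neg_add']
    · rw [Set.indicator_of_notMem h, Set.indicator_of_notMem h, smul_zero]
  simp_rw [this]
  rw [MeasureTheory.setIntegral_indicator measurableSet_Ioi]
  congr 2
  ext t; simp only [Set.mem_inter_iff, Set.mem_Ioi]; constructor
  · exact fun h => h.2
  · exact fun h => ⟨by linarith, h⟩

lemma zeta_int {s : ℂ} (hs : 1 < s.re) :
    riemannZeta₁ s = s - s * (s - 1) * mellin zfr (-s) := by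
  have hs1 : s ≠ 1 := by rintro rfl; simp at hs
  have hs1' : s - 1 ≠ 0 := sub_ne_zero.2 hs1
  have hz := LSeries_one_eq_riemannZeta hs
  rw [LSeries_eq_mul_integral' 1 zero_le_one hs, riemannZeta_eq_inv_sub_mul hs1] at hz
  swap
  · refine Asymptotics.IsBigO.of_bound 1 ?_
    filter_upwards with n
    simp
  have e1 : (∫ t in Set.Ioi (1:ℝ), (t : ℂ) ^ (-s)) = 1 / (s - 1) := by
    rw [integral_Ioi_cpow_of_lt (by simpa using hs) one_pos]
    have : -s + 1 ≠ 0 := by intro h; apply hs1'; linear_combination -h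
    simp only [Complex.ofReal_one, Complex.one_cpow]
    field_simp
    ring
  have i1 : MeasureTheory.IntegrableOn (fun t : ℝ => (t : ℂ) ^ (-s)) (Set.Ioi 1) :=
    integrableOn_Ioi_cpow_of_lt (by simpa using hs) one_pos
  have i2 : MeasureTheory.IntegrableOn (fun t : ℝ => ((t - (⌊t⌋₊ : ℝ) : ℝ) : ℂ) * (t:ℂ) ^ (-(s+1))) (Set.Ioi 1) := by
    have i3 : MeasureTheory.IntegrableOn (fun t : ℝ => (t : ℂ) ^ (-(s+1))) (Set.Ioi 1) :=
      integrableOn_Ioi_cpow_of_lt (by simp; linarith) one_pos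
    refine MeasureTheory.Integrable.bdd_mul (c := 1) i3 ?_ ?_
    · refine Measurable.aestronglyMeasurable ?_
      refine Complex.measurable_ofReal.comp ?_
      refine measurable_id.sub ?_
      exact (measurable_from_top (f := fun n : ℕ => (n : ℝ))).comp Nat.measurable_floor
    · refine (MeasureTheory.ae_restrict_mem measurableSet_Ioi).mono fun t ht => ?_
      have := zfr_norm t
      unfold zfr at this
      rwa [Set.indicator_of_mem ht] at this
  have e2 : (∫ t in Set.Ioi (1:ℝ), (∑ k ∈ Finset.Icc 1 ⌊t⌋₊, (1 : ℕ → ℂ) k) * (t:ℂ) ^ (-(s + 1)))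
      = 1 / (s - 1) - mellin zfr (-s) := by
    rw [zfr_mellin, ← e1, ← MeasureTheory.integral_sub i1 i2]
    refine MeasureTheory.setIntegral_congr_fun measurableSet_Ioi fun t ht => ?_
    have ht1 : (1:ℝ) < t := ht
    have : (t:ℂ) ^ (-s) = t * (t:ℂ) ^ (-(s+1)) := by
      have h0 : (t:ℂ) ≠ 0 := by exact_mod_cast (by linarith : t ≠ 0)
      rw [show -s = 1 + -(s+1) by ring, Complex.cpow_add _ _ h0, Complex.cpow_one]
    simp only [this]
    simp
    ring
  rw [e2] at hz
  field_simp at hz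
  linear_combination -hz

lemma zeta_int' {s : ℂ} (hs : 0 < s.re) :
    riemannZeta₁ s = s - s * (s - 1) * mellin zfr (-s) := by
  have hU : IsOpen {s : ℂ | 0 < s.re} := isOpen_lt continuous_const Complex.continuous_re
  have h := AnalyticOnNhd.eqOn_of_preconnected_of_eventuallyEq (𝕜 := ℂ) (U := {s : ℂ | 0 < s.re})
    (f := riemannZeta₁) (g := fun s => s - s * (s - 1) * mellin zfr (-s)) (z₀ := 2)
    (DifferentiableOn.analyticOnNhd differentiable_riemannZeta₁.differentiableOn hU)
    (DifferentiableOn.analyticOnNhd (fun s hs => by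
      have := zfr_diff hs
      refine DifferentiableAt.differentiableWithinAt ?_
      fun_prop) hU)
    (convex_halfSpace_re_gt 0).isPreconnected (by simp) ?_
  · exact h hs
  · filter_upwards [(isOpen_lt continuous_const Complex.continuous_re).mem_nhds (show (1:ℝ) < (2:ℂ).re by norm_num)] with z hz
    exact zeta_int hz

lemma zfr_real (σ : ℝ) : ∃ r : ℝ, 0 ≤ r ∧ mellin zfr (-(σ:ℂ)) = r := by
  refine ⟨∫ t in Set.Ioi (1:ℝ), (t - (⌊t⌋₊ : ℝ)) * t ^ (-(σ+1)), ?_, ?_⟩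
  · refine MeasureTheory.setIntegral_nonneg measurableSet_Ioi fun t ht => ?_
    have ht1 : (1:ℝ) < t := ht
    have := Nat.floor_le (show 0 ≤ t by linarith)
    exact mul_nonneg (by linarith) (Real.rpow_nonneg (by linarith) _)
  · rw [zfr_mellin]
    refine Eq.trans ?_ (integral_ofReal (𝕜 := ℂ))
    refine MeasureTheory.setIntegral_congr_fun measurableSet_Ioi fun t ht => ?_
    have ht1 : (1:ℝ) < t := ht
    simp [Complex.ofReal_cpow (show 0 ≤ t by linarith)]

lemma zeta_neg {s : ℝ} (h1 : -1 < s) (h2 : s < 1) : (riemannZeta (s:ℂ)).re ≤ 0 := by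
  rcases lt_trichotomy s 0 with h | h | h
  · obtain ⟨u, rfl⟩ : ∃ u, s = 1 - u := ⟨1 - s, by ring⟩
    have hu1 : 1 < u := by linarith
    have hu2 : u < 2 := by linarith
    have hf := riemannZeta_one_sub (s := (u:ℂ)) (fun n hn => by
      have : u = -(n:ℝ) := by exact_mod_cast hn
      have : (0:ℝ) ≤ n := n.cast_nonneg
      linarith) (by exact_mod_cast hu1.ne')
    have hz : riemannZeta (u:ℂ) = ((riemannZeta (u:ℂ)).re : ℂ) := by
      apply Complex.ext <;> simp [riemannZeta_im_eq_zero_of_one_lt hu1]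
    have hzp := riemannZeta_re_pos_of_one_lt hu1
    set z := (riemannZeta (u:ℂ)).re
    have e : riemannZeta (((1 - u : ℝ)):ℂ) = ((2 * (2 * Real.pi) ^ (-u) * Real.Gamma u * Real.cos (Real.pi * u / 2) * z : ℝ) : ℂ) := by
      push_cast
      rw [hf, hz, Complex.Gamma_ofReal, Complex.ofReal_cpow (by positivity)]
      push_cast
      rfl
    rw [e, Complex.ofReal_re]
    have hc : Real.cos (Real.pi * u / 2) ≤ 0 := by
      apply Real.cos_nonpos_of_pi_div_two_le_of_le <;> nlinarith [Real.pi_pos]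
    have hG := Real.Gamma_pos_of_pos (show 0 < u by linarith)
    have hp : 0 < (2 * Real.pi) ^ (-u) := by positivity
    have : 0 ≤ 2 * (2 * Real.pi) ^ (-u) * Real.Gamma u * z := by positivity
    nlinarith
  · subst h; simp [riemannZeta_zero]; norm_num
  · have hs1 : (s:ℂ) ≠ 1 := by exact_mod_cast h2.ne
    obtain ⟨r, hr, e⟩ := zfr_real s
    rw [riemannZeta_eq_inv_sub_mul hs1, zeta_int' (by simpa using h), e]
    have : ((s:ℂ) - 1)⁻¹ * (s - s * (s - 1) * r) = (((s-1)⁻¹ * (s - s * (s - 1) * r) : ℝ) : ℂ) := by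
      push_cast; rfl
    rw [this, Complex.ofReal_re]
    apply mul_nonpos_of_nonpos_of_nonneg
    · exact inv_nonpos.2 (by linarith)
    · nlinarith [mul_nonneg (mul_nonneg h.le (sub_nonneg.2 h2.le)) hr]

lemma half_sum (α : ℝ) (hα : 0 < α) (m : ℤ) (hm : 1 ≤ m) :
    ∑ k ∈ Finset.Icc 1 m, (|(k:ℝ)| ^ (1 + α))⁻¹ + (m:ℝ) ^ (-α) / α ≤ 1 + 1 / α := by
  induction m, hm using Int.leInduction with
  | base => simp
  | succ m hm ih =>
    have e : Finset.Icc 1 (m+1) = insert (m+1) (Finset.Icc 1 m) := by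
      ext x; simp only [Finset.mem_Icc, Finset.mem_insert]; omega
    rw [e, Finset.sum_insert (by simp)]
    have hmr : (1:ℝ) ≤ m := by exact_mod_cast hm
    have key : (|((m+1 : ℤ):ℝ)| ^ (1 + α))⁻¹ + ((m+1:ℤ):ℝ) ^ (-α) / α ≤ (m:ℝ) ^ (-α) / α := by
      push_cast
      have hp : (0:ℝ) < m + 1 := by linarith
      have hq : (0:ℝ) < (m:ℝ) / (m+1) := by positivity
      rw [abs_of_pos hp, Real.rpow_add hp, Real.rpow_one]
      have h1 : (m:ℝ) ^ (-α) = ((m:ℝ)/(m+1)) ^ (-α) * ((m:ℝ)+1) ^ (-α) := by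
        rw [← Real.mul_rpow hq.le hp.le]; congr 1; field_simp
      have h2 : 1 + α / (m+1) ≤ ((m:ℝ)/(m+1)) ^ (-α) := by
        rw [Real.rpow_def_of_pos hq]
        have a1 := Real.add_one_le_exp (Real.log ((m:ℝ)/(m+1)) * -α)
        have a2 := Real.log_le_sub_one_of_pos hq
        have a3 : (m:ℝ)/(m+1) - 1 = - (1/(m+1)) := by field_simp; ring
        rw [a3] at a2
        have a4 : α / ((m:ℝ)+1) = α * (1/(m+1)) := by ring
        rw [a4]; nlinarith
      have hX : 0 < ((m:ℝ)+1) ^ (-α) := by positivity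
      rw [h1]
      have h3 : (((m:ℝ)+1) * ((m:ℝ)+1) ^ α)⁻¹ = ((m:ℝ)+1) ^ (-α) * (α / (m+1)) / α := by
        rw [Real.rpow_neg hp.le]; field_simp
      rw [h3, ← add_div]
      gcongr
      nlinarith
    linarith

lemma full_sum (α : ℝ) (hα : 0 < α) (a b : ℤ) (ha : a ≤ -1) (hb : 1 ≤ b) :
    dsum a b (fun k => (|(k:ℝ)| ^ (1 + α))⁻¹) + (((-a : ℤ):ℝ) ^ (-α) + (b:ℝ) ^ (-α)) / α ≤ 2 * (1 + 1 / α) := by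
  have h1 := half_sum α hα b hb
  have h2 := half_sum α hα (-a) (by omega)
  have h3 : dsum a b (fun k => (|(k:ℝ)| ^ (1 + α))⁻¹) ≤ ∑ k ∈ (Finset.Icc a b).erase 0, (|(k:ℝ)| ^ (1 + α))⁻¹ := by
    unfold dsum
    refine Finset.sum_le_sum fun k _ => ?_
    have : 0 ≤ (|(k:ℝ)| ^ (1 + α))⁻¹ := by positivity
    split_ifs <;> linarith
  have e : (Finset.Icc a b).erase 0 = Finset.Icc a (-1) ∪ Finset.Icc 1 b := by
    ext x; simp only [Finset.mem_erase, Finset.mem_Icc, Finset.mem_union]; omega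
  have hd : Disjoint (Finset.Icc a (-1)) (Finset.Icc 1 b) := by
    rw [Finset.disjoint_left]; intro x; simp only [Finset.mem_Icc]; omega
  have h4 : ∑ k ∈ Finset.Icc a (-1), (|(k:ℝ)| ^ (1 + α))⁻¹ = ∑ k ∈ Finset.Icc 1 (-a), (|(k:ℝ)| ^ (1 + α))⁻¹ := by
    refine Finset.sum_nbij' (fun k => -k) (fun k => -k) ?_ ?_ ?_ ?_ ?_
    · intro k; simp only [Finset.mem_Icc]; omega
    · intro k; simp only [Finset.mem_Icc]; omega
    · simp
    · simp
    · intro k _; simp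
  rw [e, Finset.sum_union hd, h4] at h3
  rw [add_div]
  linarith

lemma dsum_step (c α : ℝ) (a b : ℤ) (Q : ℤ → ℝ) (p M : ℝ) (hc : 0 ≤ c) (hQ : ∀ k, 0 ≤ Q k ∧ Q k ≤ M) :
    ∃ T, 0 ≤ T ∧ T ≤ M * dsum a b (fun k => (|(k:ℝ)| ^ (1 + α))⁻¹) ∧
     dsum a b (fun k => c * ((Q k - p) * (|(k:ℝ)| ^ (1 + α))⁻¹)) =
      c * (T - p * dsum a b (fun k => (|(k:ℝ)| ^ (1 + α))⁻¹)) := by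
  refine ⟨dsum a b (fun k => Q k * (|(k:ℝ)| ^ (1 + α))⁻¹), ?_, ?_, ?_⟩
  · unfold dsum
    refine Finset.sum_nonneg fun k _ => ?_
    have := (hQ k).1
    split_ifs <;> positivity
  · unfold dsum
    rw [Finset.mul_sum]
    refine Finset.sum_le_sum fun k _ => ?_
    have h1 : 0 ≤ (|(k:ℝ)| ^ (1 + α))⁻¹ := by positivity
    have := mul_le_mul_of_nonneg_right (hQ k).2 h1
    split_ifs <;> nlinarith
  · unfold dsum
    rw [Finset.mul_sum, ← Finset.sum_sub_distrib, Finset.mul_sum]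
    refine Finset.sum_congr rfl fun k _ => ?_
    ring

lemma Cconst_pos {α : ℝ} (hα : 0 < α) (hα2 : α < 2) : 0 < Cconst α := by
  unfold Cconst
  have h1 := Real.Gamma_pos_of_pos (show 0 < (1+α)/2 by linarith)
  have h2 := Real.Gamma_pos_of_pos (show 0 < 1 - α/2 by linarith)
  have h3 := Real.pi_pos
  positivity

/-- Discrete maximum principle for the explicit Euler scheme with the absorbing condition. -/
theorem stmt_0 (α ε h Δt M : ℝ) (J : ℤ)
    (hα : 0 < α) (hα2 : α < 2) (hε : 0 < ε) (hJ : 1 ≤ J)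
    (hh : h = 1 / (J : ℝ)) (hΔt : 0 < Δt)
    (P : ℕ → ℤ → ℝ)
    (hbc : ∀ n : ℕ, ∀ j : ℤ, J ≤ |j| → P n j = 0)
    (hscheme : ∀ n : ℕ, ∀ j : ℤ, |j| < J →
      P (n + 1) j =
        P n j
          - Δt * ε * Cconst α * zetaR (α - 1) * h ^ (-α) *
              (P n (j - 1) - 2 * P n j + P n (j + 1))
          - Δt * ε * Cconst α / α *
              ((1 + (j : ℝ) * h) ^ (-α) + (1 - (j : ℝ) * h) ^ (-α)) * P n j
          + Δt * ε * Cconst α * h *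
              dsum (-J - j) (J - j)
                (fun k => (P n (j + k) - P n j) / |(k : ℝ) * h| ^ (1 + α)))
    (hCFL : Δt / h ^ α ≤ 1 / (2 * ε * Cconst α * (1 + 1 / α - zetaR (α - 1))))
    (hM : 0 ≤ M)
    (hinit : ∀ j : ℤ, 0 ≤ P 0 j ∧ P 0 j ≤ M) :
    ∀ n : ℕ, ∀ j : ℤ, 0 ≤ P n j ∧ P n j ≤ M := by
  have hC := Cconst_pos hα hα2
  have hz : zetaR (α - 1) ≤ 0 := zeta_neg (by linarith) (by linarith)
  set C := Cconst α
  obtain ⟨Z, hZ⟩ : ∃ Z, zetaR (α - 1) = -Z := ⟨-zetaR (α - 1), by ring⟩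
  rw [hZ] at hz
  simp only [hZ] at hscheme hCFL
  have hZ0 : 0 ≤ Z := by linarith
  have hJr : (1:ℝ) ≤ J := by exact_mod_cast hJ
  have hh0 : 0 < h := by rw [hh]; positivity
  have hJh : (J:ℝ) * h = 1 := by rw [hh]; field_simp
  have hhα : 0 < h ^ (-α) := by positivity
  obtain ⟨c, hcdef⟩ : ∃ c, c = Δt * ε * C * h ^ (-α) := ⟨_, rfl⟩
  have hc : 0 < c := by rw [hcdef]; positivity
  have hcfl : 2 * c * (1 + 1 / α + Z) ≤ 1 := by
    have hD : 0 < 2 * ε * C * (1 + 1 / α - -Z) := by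
      have : 0 < 1 / α := by positivity
      have : 0 < 1 + 1 / α - -Z := by linarith
      positivity
    rw [le_div_iff₀ hD] at hCFL
    have : 2 * c * (1 + 1 / α + Z) = Δt / h ^ α * (2 * ε * C * (1 + 1 / α - -Z)) := by
      rw [hcdef, Real.rpow_neg hh0.le, div_eq_mul_inv Δt]; ring
    rw [this]; exact hCFL
  intro n
  induction n with
  | zero => exact hinit
  | succ n ih =>
    intro j
    rcases lt_or_ge |j| J with hj | hj
    swap
    · rw [hbc _ _ hj]; exact ⟨le_rfl, hM⟩
    rw [hscheme n j hj]
    obtain ⟨hj1, hj2⟩ := abs_lt.1 hj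
    obtain ⟨T, hT0, hT1, hT⟩ := dsum_step (h ^ (-(1 + α))) α (-J - j) (J - j) (fun k => P n (j + k)) (P n j) M
      (by positivity) (fun k => ih _)
    have hS := full_sum α hα (-J - j) (J - j) (by omega) (by omega)
    have hS0 : 0 ≤ dsum (-J - j) (J - j) (fun k => (|(k:ℝ)| ^ (1 + α))⁻¹) := by
      unfold dsum
      refine Finset.sum_nonneg fun k _ => ?_
      split_ifs <;> positivity
    have e1 : (fun k : ℤ => (P n (j + k) - P n j) / |(k : ℝ) * h| ^ (1 + α)) =
        (fun k : ℤ => h ^ (-(1 + α)) * ((P n (j + k) - P n j) * (|(k:ℝ)| ^ (1 + α))⁻¹)) := by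
      funext k
      rw [abs_mul, abs_of_pos hh0, Real.mul_rpow (abs_nonneg _) hh0.le, Real.rpow_neg hh0.le,
        div_eq_mul_inv, mul_inv]
      ring
    rw [e1, hT]
    have hj1r : (0:ℝ) < J + j := by exact_mod_cast (by omega : 0 < J + j)
    have hj2r : (0:ℝ) < J - j := by exact_mod_cast (by omega : 0 < J - j)
    have e2 : (1 + (j:ℝ) * h) ^ (-α) = h ^ (-α) * (((-(-J - j) : ℤ):ℝ)) ^ (-α) := by
      rw [← Real.mul_rpow hh0.le (by push_cast; linarith)]; congr 1; push_cast
      linear_combination -hJh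
    have e3 : (1 - (j:ℝ) * h) ^ (-α) = h ^ (-α) * (((J - j : ℤ):ℝ)) ^ (-α) := by
      rw [← Real.mul_rpow hh0.le (by push_cast; linarith)]; congr 1; push_cast
      linear_combination -hJh
    have hA1 : 0 < (((-(-J - j) : ℤ):ℝ)) ^ (-α) := Real.rpow_pos_of_pos (by push_cast; linarith) _
    have hA2 : 0 < (((J - j : ℤ):ℝ)) ^ (-α) := Real.rpow_pos_of_pos (by push_cast; linarith) _
    have e4 : h * h ^ (-(1+α)) = h ^ (-α) := by
      nth_rewrite 1 [← Real.rpow_one h]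
      rw [← Real.rpow_add hh0]; congr 1; ring
    rw [e2, e3]
    set S := dsum (-J - j) (J - j) (fun k => (|(k:ℝ)| ^ (1 + α))⁻¹)
    set A1 := (((-(-J - j) : ℤ):ℝ)) ^ (-α)
    set A2 := (((J - j : ℤ):ℝ)) ^ (-α)
    obtain ⟨B, hB⟩ : ∃ B, B = (A1 + A2) / α := ⟨_, rfl⟩
    have hB0 : 0 ≤ B := by rw [hB]; positivity
    rw [← hB] at hS
    have e5 : P n j - Δt * ε * C * -Z * h ^ (-α) * (P n (j - 1) - 2 * P n j + P n (j + 1))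
        - Δt * ε * C / α * (h ^ (-α) * A1 + h ^ (-α) * A2) * P n j
        + Δt * ε * C * h * (h ^ (-(1 + α)) * (T - P n j * S)) =
        (1 - c * (2 * Z + B + S)) * P n j + c * Z * (P n (j - 1) + P n (j + 1)) + c * T := by
      rw [hcdef, hB]
      linear_combination (Δt * ε * C * (T - P n j * S)) * e4
    rw [e5]
    have hd : 0 ≤ 1 - c * (2 * Z + B + S) := by
      have := mul_le_mul_of_nonneg_left hS hc.le
      nlinarith
    have p0 := ih j
    have p1 := ih (j-1)
    have p2 := ih (j+1)
    have hcZ : 0 ≤ c * Z := by positivity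
    constructor
    · have := mul_nonneg hd p0.1
      have := mul_nonneg hcZ (add_nonneg p1.1 p2.1)
      have := mul_nonneg hc.le hT0
      linarith
    · have q1 := mul_le_mul_of_nonneg_left p0.2 hd
      have q2 := mul_le_mul_of_nonneg_left (add_le_add p1.2 p2.2) hcZ
      have q3 := mul_le_mul_of_nonneg_left hT1 hc.le
      have q4 := mul_nonneg (mul_nonneg hc.le hB0) hM
      linarith
end

section
/- Under the CFL-type condition Δt/h^α ≤ 1/(2 ε C_α (1 + 1/α − ζ(α−1))), the explicit Euler scheme for the natural condition satisfies the discrete maximum principle: if M ≥ 0 and 0 ≤ P^0_j ≤ M for all j ∈ ℤ (with P^0_j = 0 for |j| ≥ J), then for every n ≥ 0 and every j ∈ ℤ one has 0 ≤ P^n_j ≤ M. -/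
open scoped BigOperators

noncomputable def GG (a : ℝ) (s : ℂ) : ℂ :=
  (s - 1) * (a : ℂ) ^ (-s) + ((a + 1 : ℝ) : ℂ) ^ (1 - s) - (a : ℂ) ^ (1 - s)

lemma GG_aux {a : ℝ} (ha : 0 < a) {s : ℂ} (hs : 0 < s.re) {y : ℝ} (hy : y ∈ Set.Icc a (a + 1)) :
    ‖(y : ℂ) ^ (-s) - (a : ℂ) ^ (-s)‖ ≤ ‖s‖ * a ^ (-s.re - 1) := by
  have hs0 : s ≠ 0 := by rintro rfl; simp at hs
  have h := Convex.norm_image_sub_le_of_norm_hasDerivWithin_le (𝕜 := ℝ)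
    (f := fun y : ℝ => (y : ℂ) ^ (-s)) (f' := fun y : ℝ => (-s) * (y : ℂ) ^ (-s - 1))
    (s := Set.Icc a (a + 1)) (x := a) (y := y) (C := ‖s‖ * a ^ (-s.re - 1))
    (fun x hx => (hasDerivAt_ofReal_cpow_const (by linarith [hx.1]) (by simpa using hs0)).hasDerivWithinAt)
    (fun x hx => by
      have hx0 : 0 < x := by linarith [hx.1]
      rw [norm_mul, norm_neg, Complex.norm_cpow_eq_rpow_re_of_pos hx0]
      gcongr ?_ * ?_
      simp only [Complex.sub_re, Complex.neg_re, Complex.one_re]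
      exact Real.rpow_le_rpow_of_nonpos ha hx.1 (by linarith))
    (convex_Icc _ _) (by simp) hy
  refine h.trans ?_
  have : ‖y - a‖ ≤ 1 := by rw [Real.norm_eq_abs, abs_le]; constructor <;> linarith [hy.1, hy.2]
  exact mul_le_of_le_one_right (by positivity) this

lemma GG_norm {a : ℝ} (ha : 0 < a) {s : ℂ} (hs : 0 < s.re) :
    ‖GG a s‖ ≤ ‖s - 1‖ * (‖s‖ * a ^ (-s.re - 1)) := by
  by_cases h1 : s = 1
  · subst h1; simp [GG]
  have h := Convex.norm_image_sub_le_of_norm_hasDerivWithin_le (𝕜 := ℝ)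
    (f := fun y : ℝ => (y : ℂ) ^ (1 - s) + (s - 1) * (a : ℂ) ^ (-s) * (y : ℂ))
    (f' := fun y : ℝ => (1 - s) * (y : ℂ) ^ (1 - s - 1) + (s - 1) * (a : ℂ) ^ (-s) * 1)
    (s := Set.Icc a (a + 1)) (x := a) (y := a + 1) (C := ‖s - 1‖ * (‖s‖ * a ^ (-s.re - 1)))
    (fun x hx => ((hasDerivAt_ofReal_cpow_const (by linarith [hx.1])
      (sub_ne_zero.2 (Ne.symm h1))).add
        ((Complex.ofRealCLM.hasDerivAt (x := x)).const_mul _)).hasDerivWithinAt)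
    (fun x hx => by
      have : (1 - s) * (x : ℂ) ^ (1 - s - 1) + (s - 1) * (a : ℂ) ^ (-s) * 1
        = -((s - 1) * ((x : ℂ) ^ (-s) - (a : ℂ) ^ (-s))) := by
        rw [show 1 - s - 1 = -s by ring]; ring
      rw [this, norm_neg, norm_mul]
      gcongr
      exact GG_aux ha hs hx)
    (convex_Icc _ _) (by simp) (by simp)
  have e : GG a s = (((a + 1 : ℝ) : ℂ) ^ (1 - s) + (s - 1) * (a : ℂ) ^ (-s) * ((a + 1 : ℝ) : ℂ))
    - ((a : ℂ) ^ (1 - s) + (s - 1) * (a : ℂ) ^ (-s) * (a : ℂ)) := by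
    unfold GG; push_cast; ring
  rw [e]
  simpa using h

lemma GG_diff {a : ℝ} (ha : 0 < a) : Differentiable ℂ (GG a) := by
  have h1 : (a : ℂ) ≠ 0 := by exact_mod_cast ha.ne'
  have h2 : ((a + 1 : ℝ) : ℂ) ≠ 0 := by exact_mod_cast (by linarith : (a + 1) ≠ 0)
  unfold GG
  intro s
  refine ((DifferentiableAt.mul (by fun_prop) (DifferentiableAt.const_cpow (by fun_prop) (Or.inl h1))).add
    (DifferentiableAt.const_cpow (by fun_prop) (Or.inl h2))).sub
    (DifferentiableAt.const_cpow (by fun_prop) (Or.inl h1))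

lemma GG_summable {σ : ℝ} (hσ : 0 < σ) : Summable (fun n : ℕ => ((n : ℝ) + 1) ^ (-σ - 1)) := by
  have := (summable_nat_add_iff 1).2 (Real.summable_nat_rpow.2 (show -σ - 1 < -1 by linarith))
  simpa using this

lemma GG_sum_of_gt {s : ℂ} (hs : 1 < s.re) :
    ∑' n : ℕ, GG ((n : ℝ) + 1) s = (s - 1) * riemannZeta s - 1 := by
  have hS : Summable (fun n : ℕ => GG ((n : ℝ) + 1) s) := by
    refine Summable.of_norm_bounded (((GG_summable (by linarith : 0 < s.re)).mul_left ‖s‖).mul_left ‖s - 1‖)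
      fun n => GG_norm (by positivity) (by linarith)
  have h1 : Filter.Tendsto (fun N : ℕ => ∑ n ∈ Finset.range N, GG ((n : ℝ) + 1) s) Filter.atTop
      (nhds ((s - 1) * riemannZeta s + 0 - 1)) := by
    have hz : Filter.Tendsto (fun N : ℕ => ∑ n ∈ Finset.range N, 1 / ((n : ℂ) + 1) ^ s) Filter.atTop
        (nhds (riemannZeta s)) := by
      rw [zeta_eq_tsum_one_div_nat_add_one_cpow hs]
      refine Summable.tendsto_sum_tsum_nat ?_
      have := (summable_nat_add_iff 1).2 (Complex.summable_one_div_nat_cpow.2 hs)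
      simpa using this
    have ht : Filter.Tendsto (fun N : ℕ => (((N : ℝ) + 1 : ℝ) : ℂ) ^ (1 - s)) Filter.atTop (nhds 0) := by
      rw [tendsto_zero_iff_norm_tendsto_zero]
      have h2 := (tendsto_rpow_neg_atTop (show 0 < s.re - 1 by linarith)).comp
        (Filter.tendsto_atTop_add_const_right _ (1 : ℝ) tendsto_natCast_atTop_atTop)
      refine h2.congr fun N => ?_
      simp only [Function.comp]
      rw [Complex.norm_cpow_eq_rpow_re_of_pos (by positivity)]
      simp
    refine (((hz.const_mul (s - 1)).add ht).sub_const 1).congr fun N => ?_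
    induction N with
    | zero => simp
    | succ N ih =>
      rw [Finset.sum_range_succ _ N, Finset.sum_range_succ _ N, ← ih]
      unfold GG
      rw [Complex.cpow_neg]
      push_cast
      ring
  have := tendsto_nhds_unique hS.tendsto_sum_tsum_nat h1
  rw [this, add_zero]

lemma GG_real {a s : ℝ} (ha : 0 < a) (hs : 0 < s) (hs1 : s < 1) :
    (1 - s) * ((a + 1) ^ (-s) - a ^ (-s)) ≤ (GG a s).re := by
  have e : GG a s = (((s - 1) * a ^ (-s) + (a + 1) ^ (1 - s) - a ^ (1 - s) : ℝ) : ℂ) := by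
    unfold GG
    push_cast [Complex.ofReal_cpow ha.le, Complex.ofReal_cpow (by linarith : 0 ≤ a + 1)]
    ring
  rw [e, Complex.ofReal_re]
  have hb := rpow_one_add_le_one_add_mul_self (s := -(1 / (a + 1)))
    (by rw [neg_le_neg_iff, div_le_one (by linarith)]; linarith) (p := 1 - s) (by linarith) (by linarith)
  have h1 : 1 + -(1 / (a + 1)) = a / (a + 1) := by field_simp; ring
  rw [h1, Real.div_rpow ha.le (by linarith), div_le_iff₀ (by positivity)] at hb
  have h2 : (a + 1) ^ (1 - s) = (a + 1) * (a + 1) ^ (-s) := by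
    rw [show 1 - s = 1 + -s by ring, Real.rpow_add (by linarith), Real.rpow_one]
  rw [h2] at hb ⊢
  have h3 : (1 + (1 - s) * -(1 / (a + 1))) * ((a + 1) * (a + 1) ^ (-s))
    = (a + 1) * (a + 1) ^ (-s) - (1 - s) * (a + 1) ^ (-s) := by field_simp; ring
  rw [h3] at hb
  linarith

lemma zeta_neg_strip {s : ℝ} (hs : 0 < s) (hs1 : s < 1) : zetaR s ≤ 0 := by
  set U : Set ℂ := {z : ℂ | s / 2 < z.re} ∩ Metric.ball 0 3 with hU
  have hUo : IsOpen U := (isOpen_lt continuous_const Complex.continuous_re).inter Metric.isOpen_ball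
  have hUc : IsPreconnected U :=
    ((convex_halfSpace_re_gt (s / 2)).inter (convex_ball 0 3)).isPreconnected
  have hb : ∀ (n : ℕ) (z : ℂ), z ∈ U → ‖GG ((n : ℝ) + 1) z‖ ≤ 4 * (3 * ((n : ℝ) + 1) ^ (-(s / 2) - 1)) := by
    intro n z hz
    have hz1 : s / 2 < z.re := hz.1
    have hz2 : ‖z‖ < 3 := by simpa using hz.2
    refine (GG_norm (by positivity) (by linarith)).trans ?_
    have : ‖z - 1‖ ≤ 4 := (norm_sub_le _ _).trans (by simp; linarith)
    gcongr
    linarith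
  have hsum : Summable (fun n : ℕ => 4 * (3 * ((n : ℝ) + 1) ^ (-(s / 2) - 1))) :=
    ((GG_summable (by linarith : 0 < s / 2)).mul_left 3).mul_left 4
  have hd : DifferentiableOn ℂ (fun z => ∑' n : ℕ, GG ((n : ℝ) + 1) z) U :=
    Complex.differentiableOn_tsum_of_summable_norm hsum
      (fun n => (GG_diff (by positivity)).differentiableOn) hUo hb
  have hz1 : ∀ z : ℂ, z ≠ 1 → riemannZeta₁ z = (z - 1) * riemannZeta z := by
    intro z hz
    have : z - 1 ≠ 0 := sub_ne_zero.2 hz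
    rw [riemannZeta_eq_inv_sub_mul hz]; field_simp
  have heq := AnalyticOnNhd.eqOn_of_preconnected_of_eventuallyEq (hd.analyticOnNhd hUo)
    ((differentiable_riemannZeta₁.sub_const 1).differentiableOn.analyticOnNhd hUo) hUc
    (z₀ := 2) (by constructor <;> simp <;> linarith) (by
      filter_upwards [(isOpen_lt continuous_const Complex.continuous_re).mem_nhds
        (show (1 : ℝ) < (2 : ℂ).re by simp)] with z hz
      have hz : 1 < z.re := hz
      rw [GG_sum_of_gt hz, hz1 z (by rintro rfl; simp at hz)])
  have hsU : (s : ℂ) ∈ U := by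
    constructor
    · simp; linarith
    · simp [abs_of_pos hs]; linarith
  have h : ∑' n : ℕ, GG ((n : ℝ) + 1) s = riemannZeta₁ s - 1 := heq hsU
  have hne : (s : ℂ) ≠ 1 := by exact_mod_cast hs1.ne
  have hS : Summable (fun n : ℕ => GG ((n : ℝ) + 1) s) :=
    Summable.of_norm_bounded hsum fun n => hb n _ hsU
  have h' : HasSum (fun n : ℕ => GG ((n : ℝ) + 1) s) ((s - 1) * riemannZeta s - 1) := by
    rw [← hz1 _ hne]; rw [← h]; exact hS.hasSum
  have hr := (Complex.hasSum_re h').tendsto_sum_nat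
  have hre : (((s : ℂ) - 1) * riemannZeta s - 1).re = (s - 1) * zetaR s - 1 := by
    simp [zetaR]
  rw [hre] at hr
  have key : -(1 - s) ≤ (s - 1) * zetaR s - 1 := by
    refine ge_of_tendsto' hr fun N => ?_
    have : (1 - s) * (((N : ℝ) + 1) ^ (-s) - 1) ≤ ∑ n ∈ Finset.range N, (GG ((n : ℝ) + 1) s).re := by
      induction N with
      | zero => simp
      | succ N ih =>
        rw [Finset.sum_range_succ]
        have := GG_real (a := (N : ℝ) + 1) (by positivity) hs hs1
        push_cast
        linarith
    have h2 : 0 ≤ (1 - s) * ((N : ℝ) + 1) ^ (-s) := by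
      have : 0 ≤ 1 - s := by linarith
      positivity
    linarith
  by_contra hc
  push Not at hc
  nlinarith

lemma zeta_neg_left {s : ℝ} (hs : -1 < s) (hs1 : s < 0) : zetaR s ≤ 0 := by
  have h := riemannZeta_one_sub (s := ((1 - s : ℝ) : ℂ))
    (by
      intro n hn
      have : (1 - s : ℝ) = -(n : ℝ) := by exact_mod_cast hn
      have : (0 : ℝ) ≤ n := by positivity
      linarith)
    (by
      intro hn
      have : (1 - s : ℝ) = 1 := by exact_mod_cast hn
      linarith)
  have e : (1 - ((1 - s : ℝ) : ℂ)) = (s : ℂ) := by push_cast; ring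
  rw [e] at h
  have e2 : 2 * (2 * (Real.pi : ℂ)) ^ (-((1 - s : ℝ) : ℂ)) * Complex.Gamma ((1 - s : ℝ) : ℂ) *
      Complex.cos (Real.pi * ((1 - s : ℝ) : ℂ) / 2) =
      ((2 * (2 * Real.pi) ^ (-(1 - s)) * Real.Gamma (1 - s) * Real.cos (Real.pi * (1 - s) / 2) : ℝ) : ℂ) := by
    rw [Complex.Gamma_ofReal]
    push_cast [Complex.ofReal_cpow (by positivity : 0 ≤ 2 * Real.pi)]
    rfl
  rw [e2] at h
  unfold zetaR
  rw [h, Complex.re_ofReal_mul]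
  have hz := riemannZeta_re_pos_of_one_lt (x := 1 - s) (by linarith)
  have hc : Real.cos (Real.pi * (1 - s) / 2) ≤ 0 :=
    Real.cos_nonpos_of_pi_div_two_le_of_le (by nlinarith [Real.pi_pos]) (by nlinarith [Real.pi_pos])
  have hg := Real.Gamma_pos_of_pos (s := 1 - s) (by linarith)
  have hp : 0 < 2 * (2 * Real.pi) ^ (-(1 - s)) * Real.Gamma (1 - s) := by positivity
  exact mul_nonpos_of_nonpos_of_nonneg (mul_nonpos_of_nonneg_of_nonpos hp.le hc) hz.le

lemma zeta_nonpos {s : ℝ} (hs : -1 < s) (hs1 : s < 1) : zetaR s ≤ 0 := by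
  rcases lt_trichotomy s 0 with h | h | h
  · exact zeta_neg_left hs h
  · subst h; norm_num [zetaR, riemannZeta_zero]
  · exact zeta_neg_strip h hs1

lemma pw_step {α x : ℝ} (hα : 0 < α) (hx : 0 < x) :
    (x + 1) ^ (-(1 + α)) ≤ 1 / α * (x ^ (-α) - (x + 1) ^ (-α)) := by
  have hx1 : 0 < x + 1 := by linarith
  have h1 : (x + 1) ^ (-(1 + α)) = (x + 1) ^ (-α) * (x + 1)⁻¹ := by
    rw [← Real.rpow_neg_one, ← Real.rpow_add hx1]; congr 1; ring
  have h2 : x ^ (-α) = (x + 1) ^ (-α) * (x / (x + 1)) ^ (-α) := by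
    rw [← Real.mul_rpow hx1.le (by positivity)]; congr 1; field_simp
  have h3 : 1 + α * (x + 1)⁻¹ ≤ (x / (x + 1)) ^ (-α) := by
    have hq : 0 < x / (x + 1) := by positivity
    rw [Real.rpow_def_of_pos hq]
    have a1 := Real.add_one_le_exp (Real.log (x / (x + 1)) * -α)
    have a2 := Real.log_le_sub_one_of_pos hq
    have a3 : x / (x + 1) - 1 = -(x + 1)⁻¹ := by field_simp; ring
    rw [a3] at a2
    nlinarith
  have hp : 0 < (x + 1) ^ (-α) := by positivity
  rw [h1, h2, one_div, le_inv_mul_iff₀ hα]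
  nlinarith

lemma sum_pw {α : ℝ} (hα : 0 < α) (N : ℕ) :
    ∑ k ∈ (Finset.Icc (-((N : ℤ) + 1)) ((N : ℤ) + 1)).erase 0, |(k : ℝ)| ^ (-(1 + α))
      ≤ 2 * (1 + 1 / α - 1 / α * ((N : ℝ) + 1) ^ (-α)) := by
  induction N with
  | zero =>
    have : (Finset.Icc (-(((0 : ℕ) : ℤ) + 1)) (((0 : ℕ) : ℤ) + 1)).erase 0 = {-1, 1} := by decide
    rw [this]
    simp
    norm_num
  | succ N ih =>
    have : (Finset.Icc (-(((N + 1 : ℕ) : ℤ) + 1)) (((N + 1 : ℕ) : ℤ) + 1)).erase 0 =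
      insert (-((N : ℤ) + 2)) (insert ((N : ℤ) + 2) ((Finset.Icc (-((N : ℤ) + 1)) ((N : ℤ) + 1)).erase 0)) := by
      ext k
      simp only [Finset.mem_erase, Finset.mem_insert, Finset.mem_Icc]
      push_cast
      omega
    rw [this, Finset.sum_insert, Finset.sum_insert]
    · have h := pw_step hα (x := (N : ℝ) + 1) (by positivity)
      have e : |((N : ℝ) + 2)| = (N : ℝ) + 1 + 1 := by rw [abs_of_pos (by positivity)]; ring
      push_cast
      rw [abs_neg, e]
      linarith
    · simp
    · simp only [Finset.mem_erase, Finset.mem_insert, Finset.mem_Icc]; omega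

lemma dsum_w {α : ℝ} (hα : 0 < α) (a b : ℤ) :
    dsum a b (fun k => |(k : ℝ)| ^ (-(1 + α))) ≤ 2 * (1 + 1 / α) := by
  have h := sum_pw hα (a.natAbs + b.natAbs)
  have h2 : 0 ≤ 1 / α * (((a.natAbs + b.natAbs : ℕ) : ℝ) + 1) ^ (-α) := by positivity
  refine le_trans ?_ (h.trans (by linarith))
  unfold dsum
  refine (Finset.sum_le_sum (g := fun k : ℤ => |(k : ℝ)| ^ (-(1 + α))) fun k _ => ?_).trans
    (Finset.sum_le_sum_of_subset_of_nonneg ?_ fun k _ _ => by positivity)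
  · refine mul_le_of_le_one_left (by positivity) ?_
    split_ifs <;> norm_num
  · intro k
    simp only [Finset.mem_erase, Finset.mem_Icc]
    omega

lemma step_nonneg {α ε h Δt : ℝ} (hα : 0 < α) (hα2 : α < 2) (hε : 0 < ε)
    (hh : 0 < h) (hΔt : 0 < Δt)
    (hCFL : Δt / h ^ α ≤ 1 / (2 * ε * Cconst α * (1 + 1 / α - zetaR (α - 1))))
    (Q : ℤ → ℝ) (hQ : ∀ j, 0 ≤ Q j) (j a b : ℤ) :
    0 ≤ Q j
          - Δt * ε * Cconst α * zetaR (α - 1) * h ^ (-α) *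
              (Q (j - 1) - 2 * Q j + Q (j + 1))
          + Δt * ε * Cconst α * h *
              dsum a b
                (fun k => (Q (j + k) - Q j) / |(k : ℝ) * h| ^ (1 + α)) := by
  have hC := Cconst_pos hα hα2
  have hz := zeta_nonpos (s := α - 1) (by linarith) (by linarith)
  set z := zetaR (α - 1)
  set C := Cconst α
  have hD : 0 < 1 + 1 / α - z := by
    have : 0 < 1 / α := by positivity
    linarith
  have hc : 0 < Δt * ε * C * h ^ (-α) := by positivity
  have hcfl : Δt * ε * C * h ^ (-α) * (2 * (1 + 1 / α - z)) ≤ 1 := by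
    rw [le_div_iff₀ (by positivity), div_eq_mul_inv, ← Real.rpow_neg hh.le] at hCFL
    linarith
  have hd : -(h ^ (-α) * Q j * dsum a b (fun k => |(k : ℝ)| ^ (-(1 + α)))) ≤
      h * dsum a b (fun k => (Q (j + k) - Q j) / |(k : ℝ) * h| ^ (1 + α)) := by
    unfold dsum
    rw [Finset.mul_sum, Finset.mul_sum, ← Finset.sum_neg_distrib]
    refine Finset.sum_le_sum fun k _ => ?_
    have hw : (0 : ℝ) ≤ (if k = a ∨ k = b then (1 : ℝ) / 2 else 1) := by split_ifs <;> norm_num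
    set w := (if k = a ∨ k = b then (1 : ℝ) / 2 else 1)
    have e : h * (w * ((Q (j + k) - Q j) / |(k : ℝ) * h| ^ (1 + α))) =
        h ^ (-α) * w * |(k : ℝ)| ^ (-(1 + α)) * (Q (j + k) - Q j) := by
      rw [abs_mul, abs_of_pos hh, Real.mul_rpow (abs_nonneg _) hh.le, Real.rpow_neg (abs_nonneg _),
        Real.rpow_neg hh.le, Real.rpow_add hh, Real.rpow_one]
      field_simp
    rw [e]
    have : 0 ≤ h ^ (-α) * w * |(k : ℝ)| ^ (-(1 + α)) * Q (j + k) := by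
      have := hQ (j + k)
      positivity
    linarith
  have hS := dsum_w hα a b
  set S := dsum a b (fun k => |(k : ℝ)| ^ (-(1 + α)))
  set T := dsum a b (fun k => (Q (j + k) - Q j) / |(k : ℝ) * h| ^ (1 + α))
  set c := Δt * ε * C * h ^ (-α) with hcdef
  have t1 : -(c * Q j * S) ≤ Δt * ε * C * h * T := by
    have := mul_le_mul_of_nonneg_left hd (by positivity : 0 ≤ Δt * ε * C)
    rw [hcdef]; linarith
  have t2 : c * Q j * S ≤ c * Q j * (2 * (1 + 1 / α)) :=
    mul_le_mul_of_nonneg_left hS (mul_nonneg hc.le (hQ j))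
  have t3 : 0 ≤ c * (-z) * (Q (j - 1) + Q (j + 1)) :=
    mul_nonneg (mul_nonneg hc.le (by linarith)) (add_nonneg (hQ _) (hQ _))
  have t4 := mul_le_mul_of_nonneg_left hcfl (hQ j)
  have e : Δt * ε * C * z * h ^ (-α) * (Q (j - 1) - 2 * Q j + Q (j + 1))
    = c * z * (Q (j - 1) + Q (j + 1)) - 2 * c * z * Q j := by rw [hcdef]; ring
  rw [e]
  linarith

/-- Discrete maximum principle for the explicit Euler scheme with the natural condition. -/
theorem stmt_1 (α ε h Δt M : ℝ) (J : ℤ)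
    (hα : 0 < α) (hα2 : α < 2) (hε : 0 < ε) (hJ : 1 ≤ J)
    (hh : 0 < h) (hΔt : 0 < Δt)
    (P : ℕ → ℤ → ℝ)
    (hbc : ∀ n : ℕ, ∀ j : ℤ, J ≤ |j| → P n j = 0)
    (hscheme : ∀ n : ℕ, ∀ j : ℤ, |j| < J →
      P (n + 1) j =
        P n j
          - Δt * ε * Cconst α * zetaR (α - 1) * h ^ (-α) *
              (P n (j - 1) - 2 * P n j + P n (j + 1))
          + Δt * ε * Cconst α * h *
              dsum (-J - j) (J - j)
                (fun k => (P n (j + k) - P n j) / |(k : ℝ) * h| ^ (1 + α)))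
    (hCFL : Δt / h ^ α ≤ 1 / (2 * ε * Cconst α * (1 + 1 / α - zetaR (α - 1))))
    (hM : 0 ≤ M)
    (hinit : ∀ j : ℤ, 0 ≤ P 0 j ∧ P 0 j ≤ M) :
    ∀ n : ℕ, ∀ j : ℤ, 0 ≤ P n j ∧ P n j ≤ M := by
  intro n
  induction n with
  | zero => exact hinit
  | succ n ih =>
    intro j
    by_cases hj : |j| < J
    · rw [hscheme n j hj]
      refine ⟨step_nonneg hα hα2 hε hh hΔt hCFL (P n) (fun j => (ih j).1) j _ _, ?_⟩
      have hk := step_nonneg hα hα2 hε hh hΔt hCFL (fun j => M - P n j)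
        (fun j => sub_nonneg.2 (ih j).2) j (-J - j) (J - j)
      have e : dsum (-J - j) (J - j)
          (fun k => ((M - P n (j + k)) - (M - P n j)) / |(k : ℝ) * h| ^ (1 + α)) =
          -dsum (-J - j) (J - j) (fun k => (P n (j + k) - P n j) / |(k : ℝ) * h| ^ (1 + α)) := by
        unfold dsum
        rw [← Finset.sum_neg_distrib]
        refine Finset.sum_congr rfl fun k _ => ?_
        ring
      simp only [e] at hk
      linarith
    · rw [hbc (n + 1) j (not_lt.1 hj)]
      exact ⟨le_refl _, hM⟩
end

section
/- Under the CFL-type condition Δt/h^α ≤ 1/(2 ε C_α (1 + 1/α − ζ(α−1))), the explicit Euler scheme for the natural condition is stable in the maximum norm: for every n ≥ 0, sup_{j ∈ ℤ} |P^{n+1}_j| ≤ sup_{j ∈ ℤ} |P^n_j| (for any bounded initial grid function P^0 vanishing for |j| ≥ J). -/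
open scoped BigOperators

noncomputable def fracTail (x : ℝ) : ℂ := (Set.Ioi (1:ℝ)).indicator (fun x : ℝ => ((Int.fract x : ℝ) : ℂ)) x

lemma fracTail_norm (x : ℝ) : ‖fracTail x‖ ≤ 1 := by
  unfold fracTail Set.indicator
  split_ifs
  · rw [Complex.norm_real, Real.norm_eq_abs, abs_of_nonneg (Int.fract_nonneg x)]
    exact (Int.fract_lt_one x).le
  · simp

lemma fracTail_meas : Measurable fracTail := by
  unfold fracTail
  exact (Complex.measurable_ofReal.comp measurable_fract).indicator measurableSet_Ioi

lemma fracTail_li : MeasureTheory.LocallyIntegrableOn fracTail (Set.Ioi 0) := by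
  apply MeasureTheory.LocallyIntegrable.locallyIntegrableOn
  exact (MeasureTheory.locallyIntegrable_const (1:ℝ)).mono fracTail_meas.aestronglyMeasurable
    (Filter.Eventually.of_forall fun x => by simpa using fracTail_norm x)

lemma fracTail_top : fracTail =O[Filter.atTop] (fun x : ℝ => x ^ (-(0:ℝ))) := by
  refine Asymptotics.IsBigO.of_bound 1 (Filter.Eventually.of_forall fun x => ?_)
  simpa using fracTail_norm x

lemma fracTail_bot (b : ℝ) : fracTail =O[nhdsWithin 0 (Set.Ioi 0)] (fun x : ℝ => x ^ (-b)) := by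
  refine Asymptotics.IsBigO.of_bound 1 ?_
  filter_upwards [Ioo_mem_nhdsGT (show (0:ℝ) < 1 by norm_num)] with x hx
  have : fracTail x = 0 := by
    unfold fracTail; rw [Set.indicator_of_notMem]; simpa using hx.2.le
  rw [this]; simp

lemma mellin_fracTail_eq (s : ℂ) : mellin fracTail s
    = ∫ t in Set.Ioi (1:ℝ), ((Int.fract t : ℝ) : ℂ) * (t:ℂ) ^ (s - 1) := by
  unfold mellin
  have : ∀ t : ℝ, (t:ℂ) ^ (s - 1) • fracTail t =
    (Set.Ioi (1:ℝ)).indicator (fun t : ℝ => ((Int.fract t : ℝ) : ℂ) * (t:ℂ) ^ (s - 1)) t := by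
    intro t
    unfold fracTail Set.indicator
    split_ifs <;> simp [mul_comm]
  simp_rw [this]
  rw [MeasureTheory.setIntegral_indicator measurableSet_Ioi]
  congr 2
  rw [Set.inter_eq_right]
  exact Set.Ioi_subset_Ioi zero_le_one

lemma fracTail_conv (s : ℂ) (hs : s.re < 0) : MellinConvergent fracTail s :=
  mellinConvergent_of_isBigO_rpow fracTail_li fracTail_top hs (fracTail_bot (s.re - 1)) (by linarith)

lemma zeta_rep_one_lt (s : ℂ) (hs : 1 < s.re) :
    riemannZeta s = s / (s - 1) - s * mellin fracTail (-s) := by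
  rw [← LSeries_one_eq_riemannZeta hs]
  have hO : (fun n : ℕ ↦ ∑ k ∈ Finset.Icc 1 n, (1 : ℕ → ℂ) k) =O[Filter.atTop]
      fun n ↦ (n : ℝ) ^ (1:ℝ) := by
    refine Asymptotics.IsBigO.of_bound 1 (Filter.Eventually.of_forall fun x => ?_)
    simp
  rw [LSeries_eq_mul_integral 1 zero_le_one hs ((LSeriesSummable_one_iff).2 hs) hO,
    mellin_fracTail_eq]
  have hne : s - 1 ≠ 0 := by
    intro h; rw [sub_eq_zero] at h; rw [h] at hs; simp at hs
  have h1 : ∫ t in Set.Ioi (1:ℝ), (t:ℂ) ^ (-s) = 1 / (s - 1) := by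
    rw [integral_Ioi_cpow_of_lt (by simpa using hs) one_pos]
    have : -s + 1 ≠ 0 := by rw [← neg_ne_zero]; convert hne using 1; ring
    simp only [Complex.ofReal_one, Complex.one_cpow]
    rw [div_eq_div_iff this hne]; ring
  have hi1 : MeasureTheory.IntegrableOn (fun t : ℝ => (t:ℂ) ^ (-s)) (Set.Ioi 1) :=
    integrableOn_Ioi_cpow_of_lt (by simpa using hs) one_pos
  have hi2 : MeasureTheory.IntegrableOn
      (fun t : ℝ => ((Int.fract t : ℝ) : ℂ) * (t:ℂ) ^ (-s - 1)) (Set.Ioi 1) := by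
    have := (fracTail_conv (-s) (by simp; linarith))
    have := MeasureTheory.IntegrableOn.mono_set this (Set.Ioi_subset_Ioi zero_le_one)
    refine this.congr_fun (fun t ht => ?_) measurableSet_Ioi
    simp only [fracTail, Set.indicator_of_mem ht, smul_eq_mul, mul_comm]
  have key : ∫ t in Set.Ioi (1:ℝ), (∑ k ∈ Finset.Icc 1 ⌊t⌋₊, (1 : ℕ → ℂ) k) * (t:ℂ) ^ (-(s + 1))
     = (∫ t in Set.Ioi (1:ℝ), (t:ℂ) ^ (-s)) -
       ∫ t in Set.Ioi (1:ℝ), ((Int.fract t : ℝ) : ℂ) * (t:ℂ) ^ (-s - 1) := by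
    rw [← MeasureTheory.integral_sub hi1 hi2]
    refine MeasureTheory.setIntegral_congr_fun measurableSet_Ioi (fun t ht => ?_)
    have ht1 : (1:ℝ) < t := ht
    have ht0 : (t:ℂ) ≠ 0 := by exact_mod_cast (by linarith : t ≠ 0)
    have e1 : ((⌊t⌋₊ : ℝ)) = t - Int.fract t := by
      rw [natCast_floor_eq_intCast_floor (by linarith), Int.self_sub_fract]
    have e2 : (t:ℂ) ^ (-s) = t * (t:ℂ) ^ (-s - 1) := by
      rw [Complex.cpow_sub _ _ ht0, Complex.cpow_one]; field_simp
    have e3 : ((⌊t⌋₊ : ℂ)) = (t:ℂ) - ((Int.fract t : ℝ) : ℂ) := by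
      rw [← Complex.ofReal_sub, ← e1]; simp
    simp only [Pi.one_apply, Finset.sum_const, Nat.card_Icc, Nat.add_sub_cancel, nsmul_eq_mul,
      mul_one]
    rw [e3, e2, show -(s+1) = -s - 1 by ring]; ring
  rw [key, h1]; ring

lemma zeta_rep (s : ℂ) (hs : 0 < s.re) (h1 : s ≠ 1) :
    riemannZeta s = s / (s - 1) - s * mellin fracTail (-s) := by
  have hU : IsOpen {z : ℂ | 0 < z.re} := isOpen_lt continuous_const Complex.continuous_re
  have hA : AnalyticOnNhd ℂ riemannZeta₁ {z : ℂ | 0 < z.re} :=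
    differentiable_riemannZeta₁.differentiableOn.analyticOnNhd hU
  have hd : DifferentiableOn ℂ (fun z => z - (z - 1) * (z * mellin fracTail (-z)))
      {z : ℂ | 0 < z.re} := by
    intro z hz
    have hz' : (0:ℝ) < z.re := hz
    have hm : DifferentiableAt ℂ (mellin fracTail) (-z) :=
      mellin_differentiableAt_of_isBigO_rpow fracTail_li fracTail_top
        (by simpa using hz') (fracTail_bot ((-z).re - 1)) (by linarith)
    have hm2 : DifferentiableAt ℂ (fun z => mellin fracTail (-z)) z :=
      DifferentiableAt.comp (f := fun z : ℂ => -z) z hm (by fun_prop)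
    exact (DifferentiableAt.sub (by fun_prop)
      (DifferentiableAt.mul (by fun_prop) (DifferentiableAt.mul (by fun_prop) hm2))).differentiableWithinAt
  have hpre : IsPreconnected {z : ℂ | 0 < z.re} := (convex_halfSpace_re_gt 0).isPreconnected
  have hev : riemannZeta₁ =ᶠ[nhds (2:ℂ)] (fun z => z - (z - 1) * (z * mellin fracTail (-z))) := by
    have : {z : ℂ | 1 < z.re} ∈ nhds (2:ℂ) :=
      (isOpen_lt continuous_const Complex.continuous_re).mem_nhds (by simp)
    filter_upwards [this] with z hz
    have hz1 : z ≠ 1 := by rintro rfl; simp at hz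
    have hz2 := sub_ne_zero.2 hz1
    have := zeta_rep_one_lt z hz
    rw [riemannZeta_eq_inv_sub_mul hz1] at this
    field_simp at this
    rw [this]; ring
  have := hA.eqOn_of_preconnected_of_eventuallyEq (hd.analyticOnNhd hU) hpre
    (z₀ := 2) (by simp) hev hs
  have hz2 := sub_ne_zero.2 h1
  rw [riemannZeta_eq_inv_sub_mul h1, this]
  field_simp

lemma zeta_neg_Ioo (s : ℝ) (h0 : 0 < s) (h1 : s < 1) : (riemannZeta (s:ℂ)).re ≤ 0 := by
  rw [zeta_rep s (by simpa) (by exact_mod_cast h1.ne), mellin_fracTail_eq]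
  have : ∫ t in Set.Ioi (1:ℝ), ((Int.fract t : ℝ) : ℂ) * (t:ℂ) ^ (-(s:ℂ) - 1) =
      ((∫ t in Set.Ioi (1:ℝ), Int.fract t * t ^ (-s - 1) : ℝ) : ℂ) := by
    rw [← integral_complex_ofReal]
    refine MeasureTheory.setIntegral_congr_fun measurableSet_Ioi (fun t ht => ?_)
    have ht1 : (1:ℝ) < t := ht
    simp only [Complex.ofReal_mul]
    rw [Complex.ofReal_cpow (by linarith)]
    simp
  rw [this]
  have hnn : 0 ≤ ∫ t in Set.Ioi (1:ℝ), Int.fract t * t ^ (-s - 1) := by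
    refine MeasureTheory.setIntegral_nonneg measurableSet_Ioi (fun t ht => ?_)
    have ht1 : (1:ℝ) < t := ht
    exact mul_nonneg (Int.fract_nonneg t) (Real.rpow_nonneg (by linarith) _)
  set I := ∫ t in Set.Ioi (1:ℝ), Int.fract t * t ^ (-s - 1)
  have : ((s:ℂ) / (s - 1) - s * (I:ℂ)) = ((s / (s - 1) - s * I : ℝ) : ℂ) := by push_cast; ring
  rw [this, Complex.ofReal_re]
  have h2 : s / (s - 1) ≤ 0 := div_nonpos_of_nonneg_of_nonpos h0.le (by linarith)
  have := mul_nonneg h0.le hnn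
  linarith

lemma zeta_neg_Ioo' (s : ℝ) (h0 : 1 < s) (h1 : s < 2) : (riemannZeta ((1 - s : ℝ):ℂ)).re ≤ 0 := by
  rw [Complex.ofReal_sub, Complex.ofReal_one, riemannZeta_one_sub]
  · have hz : riemannZeta (s:ℂ) = (((riemannZeta (s:ℂ)).re : ℝ) : ℂ) := by
      apply Complex.ext <;> simp [riemannZeta_im_eq_zero_of_one_lt h0]
    have hzp := riemannZeta_re_pos_of_one_lt h0
    have hc : Real.cos (Real.pi * s / 2) ≤ 0 :=
      Real.cos_nonpos_of_pi_div_two_le_of_le (by nlinarith [Real.pi_pos]) (by nlinarith [Real.pi_pos])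
    have : 2 * (2 * (Real.pi:ℂ)) ^ (-(s:ℂ)) * Complex.Gamma s * Complex.cos (Real.pi * s / 2)
        * riemannZeta s = ((2 * (2 * Real.pi) ^ (-s) * Real.Gamma s * Real.cos (Real.pi * s / 2)
        * (riemannZeta (s:ℂ)).re : ℝ) : ℂ) := by
      rw [hz]
      push_cast
      rw [Complex.ofReal_cpow (by positivity), Complex.Gamma_ofReal]
      push_cast
      simp
    rw [this, Complex.ofReal_re]
    have hg := Real.Gamma_pos_of_pos (show 0 < s by linarith)
    exact mul_nonpos_of_nonpos_of_nonneg (mul_nonpos_of_nonneg_of_nonpos (by positivity) hc) hzp.le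
  · intro n h
    have : s = -(n:ℝ) := by exact_mod_cast h
    have : (0:ℝ) ≤ n := n.cast_nonneg
    linarith
  · exact_mod_cast h0.ne'

lemma zeta_nonpos_s9 (α : ℝ) (h0 : 0 < α) (h2 : α < 2) : (riemannZeta ((α - 1 : ℝ):ℂ)).re ≤ 0 := by
  rcases lt_trichotomy α 1 with h | h | h
  · have := zeta_neg_Ioo' (2 - α) (by linarith) (by linarith)
    convert this using 4; ring
  · subst h
    simp [riemannZeta_zero]
    norm_num
  · exact zeta_neg_Ioo (α - 1) (by linarith) (by linarith)

lemma Cconst_pos_s9 (α : ℝ) (h0 : 0 < α) (h2 : α < 2) : 0 < Cconst α := by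
  unfold Cconst
  have h1 := Real.Gamma_pos_of_pos (show 0 < (1 + α) / 2 by linarith)
  have h3 := Real.Gamma_pos_of_pos (show 0 < 1 - α / 2 by linarith)
  positivity

lemma step_bound (α : ℝ) (h0 : 0 < α) (N : ℕ) (hN : 1 ≤ N) :
    1 / ((N:ℝ) + 1) ^ (1 + α) ≤ ((N:ℝ) ^ (-α) - ((N:ℝ) + 1) ^ (-α)) / α := by
  have hN' : (1:ℝ) ≤ N := by exact_mod_cast hN
  have hNp : (0:ℝ) < N := by linarith
  have hx : (0:ℝ) < (N:ℝ) + 1 := by linarith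
  set x : ℝ := (N:ℝ) + 1 with hxd
  have h1 : (N:ℝ) = x * (N / x) := by field_simp
  have hq : 0 < (N:ℝ) / x := by positivity
  have h2 : (N:ℝ) ^ (-α) = x ^ (-α) * (N / x) ^ (-α) := by
    rw [← Real.mul_rpow hx.le hq.le, ← h1]
  have h3 : 1 + α / x ≤ ((N:ℝ) / x) ^ (-α) := by
    rw [Real.rpow_def_of_pos hq]
    have hl := Real.log_le_sub_one_of_pos hq
    have he : (N:ℝ) / x - 1 = - (1 / x) := by field_simp; rw [hxd]; ring
    have := Real.add_one_le_exp (Real.log ((N:ℝ) / x) * -α)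
    have h5 : Real.log ((N:ℝ) / x) * α ≤ -(1/x) * α :=
      mul_le_mul_of_nonneg_right (by linarith) h0.le
    have : α / x = 1 / x * α := by ring
    linarith
  have h4 : 1 / x ^ (1 + α) = x ^ (-α) * (1 / x) := by
    rw [Real.rpow_add hx, Real.rpow_one, Real.rpow_neg hx.le]; field_simp
  rw [h4, le_div_iff₀ h0, h2]
  have hp : 0 < x ^ (-α) := by positivity
  have := mul_le_mul_of_nonneg_left h3 hp.le
  have e : x ^ (-α) * (1 + α / x) = x ^ (-α) + x ^ (-α) * (1 / x) * α := by ring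
  linarith

lemma sum_bound (α : ℝ) (h0 : 0 < α) (N : ℕ) :
    ∑ k ∈ Finset.Icc 1 N, 1 / (k:ℝ) ^ (1 + α) ≤ 1 + 1 / α := by
  rcases Nat.eq_zero_or_pos N with rfl | hN
  · simp; positivity
  have : ∑ k ∈ Finset.Icc 1 N, 1 / (k:ℝ) ^ (1 + α) ≤ 1 + 1 / α - (N:ℝ) ^ (-α) / α := by
    induction N, hN using Nat.le_induction with
    | base => simp
    | succ n hn ih =>
      rw [Finset.sum_Icc_succ_top (by omega)]
      have := step_bound α h0 n hn
      push_cast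
      rw [sub_div] at this
      linarith
  have h : 0 ≤ (N:ℝ) ^ (-α) / α := by positivity
  linarith

lemma int_sum_bound (α : ℝ) (h0 : 0 < α) (a b : ℤ) :
    ∑ k ∈ (Finset.Icc a b).erase 0, 1 / |(k:ℝ)| ^ (1 + α) ≤ 2 * (1 + 1 / α) := by
  set N : ℕ := a.natAbs + b.natAbs with hN
  have hsub : (Finset.Icc a b).erase 0 ⊆
      (Finset.Icc 1 N).image (fun n : ℕ => (n:ℤ)) ∪ (Finset.Icc 1 N).image (fun n : ℕ => -(n:ℤ)) := by
    intro k hk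
    simp only [Finset.mem_erase, Finset.mem_Icc] at hk
    simp only [Finset.mem_union, Finset.mem_image, Finset.mem_Icc]
    rcases lt_or_gt_of_ne hk.1 with h | h
    · right; exact ⟨k.natAbs, by omega, by omega⟩
    · left; exact ⟨k.natAbs, by omega, by omega⟩
  have hnn : ∀ k : ℤ, 0 ≤ 1 / |(k:ℝ)| ^ (1 + α) := fun k => by positivity
  refine (Finset.sum_le_sum_of_subset_of_nonneg hsub (fun k _ _ => hnn k)).trans ?_
  have hui := Finset.sum_union_inter (s₁ := (Finset.Icc 1 N).image (fun n : ℕ => (n:ℤ)))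
    (s₂ := (Finset.Icc 1 N).image (fun n : ℕ => -(n:ℤ))) (f := fun k : ℤ => 1 / |(k:ℝ)| ^ (1 + α))
  have hin := Finset.sum_nonneg (s := (Finset.Icc 1 N).image (fun n : ℕ => (n:ℤ)) ∩ (Finset.Icc 1 N).image (fun n : ℕ => -(n:ℤ)))
    (fun k _ => hnn k)
  rw [Finset.sum_image (g := fun n : ℕ => (n:ℤ)) (fun x _ y _ h => by simpa using h),
    Finset.sum_image (g := fun n : ℕ => -(n:ℤ)) (fun x _ y _ h => by simpa using h)] at hui
  have := sum_bound α h0 N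
  simp only [Int.cast_neg, Int.cast_natCast, abs_neg, Nat.abs_cast] at hui
  linarith

/-- Maximum-norm stability of the explicit Euler scheme for the natural condition. -/
theorem stmt_9 (α ε h Δt : ℝ) (J : ℤ)
    (hα : 0 < α) (hα2 : α < 2) (hε : 0 < ε) (hJ : 1 ≤ J)
    (hh : 0 < h) (hΔt : 0 < Δt)
    (P : ℕ → ℤ → ℝ)
    (hbc : ∀ n : ℕ, ∀ j : ℤ, J ≤ |j| → P n j = 0)
    (hscheme : ∀ n : ℕ, ∀ j : ℤ, |j| < J →
      P (n + 1) j =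
        P n j
          - Δt * ε * Cconst α * zetaR (α - 1) * h ^ (-α) *
              (P n (j - 1) - 2 * P n j + P n (j + 1))
          + Δt * ε * Cconst α * h *
              dsum (-J - j) (J - j)
                (fun k => (P n (j + k) - P n j) / |(k : ℝ) * h| ^ (1 + α)))
    (hCFL : Δt / h ^ α ≤ 1 / (2 * ε * Cconst α * (1 + 1 / α - zetaR (α - 1)))) :
    ∀ n : ℕ, (⨆ j : ℤ, |P (n + 1) j|) ≤ ⨆ j : ℤ, |P n j| := by
  intro n
  have hz : zetaR (α - 1) ≤ 0 := zeta_nonpos_s9 α hα hα2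
  have hC := Cconst_pos_s9 α hα hα2
  have hbdd : BddAbove (Set.range fun j : ℤ => |P n j|) := by
    refine ⟨∑ j ∈ Finset.Icc (-J) J, |P n j|, ?_⟩
    rintro _ ⟨j, rfl⟩
    by_cases hj : J ≤ |j|
    · simp only [hbc n j hj, abs_zero]
      exact Finset.sum_nonneg fun _ _ => abs_nonneg _
    · have := abs_lt.1 (not_le.1 hj)
      exact Finset.single_le_sum (f := fun j => |P n j|) (fun _ _ => abs_nonneg _)
        (Finset.mem_Icc.2 ⟨this.1.le, this.2.le⟩)
  set M := ⨆ j : ℤ, |P n j| with hM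
  have hle : ∀ j, |P n j| ≤ M := fun j => le_ciSup hbdd j
  have hM0 : 0 ≤ M := (abs_nonneg _).trans (hle 0)
  refine ciSup_le fun j => ?_
  by_cases hj : J ≤ |j|
  · rw [hbc (n+1) j hj, abs_zero]; exact hM0
  rw [hscheme n j (not_le.1 hj)]
  set z := -zetaR (α - 1) with hzd
  have hz0 : 0 ≤ z := by linarith
  have hzz : zetaR (α - 1) = -z := by linarith
  set A := Δt * ε * Cconst α * h ^ (-α) with hA
  have hA0 : 0 ≤ A := by positivity
  have hACFL : A * (2 * (1 + 1 / α) + 2 * z) ≤ 1 := by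
    rw [hzz, sub_neg_eq_add, le_div_iff₀ (by positivity)] at hCFL
    rw [hA, Real.rpow_neg hh.le]
    calc _ = Δt / h ^ α * (2 * ε * Cconst α * (1 + 1 / α + z)) := by ring
      _ ≤ 1 := hCFL
  set s := (Finset.Icc (-J - j) (J - j)).erase 0 with hs
  set w : ℤ → ℝ := fun k => (if k = -J - j ∨ k = J - j then (1:ℝ)/2 else 1) * (1 / |(k:ℝ)| ^ (1 + α)) with hw
  have hw0 : ∀ k, 0 ≤ w k := fun k => by simp only [hw]; positivity
  set T := ∑ k ∈ s, w k with hT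
  have hT1 : T ≤ 2 * (1 + 1 / α) := by
    refine le_trans (Finset.sum_le_sum fun k _ => ?_) (int_sum_bound α hα (-J - j) (J - j))
    have : 0 ≤ 1 / |(k:ℝ)| ^ (1 + α) := by positivity
    refine mul_le_of_le_one_left this ?_
    split_ifs <;> norm_num
  have hds : Δt * ε * Cconst α * h * dsum (-J - j) (J - j)
                (fun k => (P n (j + k) - P n j) / |(k : ℝ) * h| ^ (1 + α))
      = A * (∑ k ∈ s, w k * P n (j + k)) - A * T * P n j := by
    have hterm : h * dsum (-J - j) (J - j)
                (fun k => (P n (j + k) - P n j) / |(k : ℝ) * h| ^ (1 + α))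
        = h ^ (-α) * ∑ k ∈ s, (w k * P n (j + k) - w k * P n j) := by
      unfold dsum
      rw [Finset.mul_sum, Finset.mul_sum]
      refine Finset.sum_congr rfl fun k _ => ?_
      have e : |(k:ℝ) * h| ^ (1 + α) = |(k:ℝ)| ^ (1 + α) * (h * h ^ α) := by
        rw [abs_mul, abs_of_pos hh, Real.mul_rpow (abs_nonneg _) hh.le, Real.rpow_add hh,
          Real.rpow_one]
      simp only [hw]
      rw [e, Real.rpow_neg hh.le, ← div_div, ← div_div]
      field_simp
    rw [mul_assoc, hterm, Finset.sum_sub_distrib, ← Finset.sum_mul]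
    simp only [hA]; ring
  have hS : |∑ k ∈ s, w k * P n (j + k)| ≤ T * M := by
    rw [hT, Finset.sum_mul]
    refine (Finset.abs_sum_le_sum_abs _ _).trans (Finset.sum_le_sum fun k _ => ?_)
    rw [abs_mul, abs_of_nonneg (hw0 k)]
    exact mul_le_mul_of_nonneg_left (hle _) (hw0 k)
  rw [hds, hzz]
  set S := ∑ k ∈ s, w k * P n (j + k)
  have hD : 0 ≤ 1 - 2 * A * z - A * T := by
    have := mul_le_mul_of_nonneg_left hT1 hA0
    linarith
  have hAz : 0 ≤ A * z := mul_nonneg hA0 hz0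
  have heq : P n j - Δt * ε * Cconst α * -z * h ^ (-α) * (P n (j - 1) - 2 * P n j + P n (j + 1))
      + (A * S - A * T * P n j) = (1 - 2 * A * z - A * T) * P n j + A * z * P n (j - 1)
        + A * z * P n (j + 1) + A * S := by
    simp only [hA]; ring
  rw [heq]
  have b1 := abs_le.1 (hle j)
  have b2 := abs_le.1 (hle (j-1))
  have b3 := abs_le.1 (hle (j+1))
  have b4 := abs_le.1 hS
  have u1 := mul_le_mul_of_nonneg_left b1.2 hD
  have l1 := mul_le_mul_of_nonneg_left b1.1 hD
  have u2 := mul_le_mul_of_nonneg_left b2.2 hAz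
  have l2 := mul_le_mul_of_nonneg_left b2.1 hAz
  have u3 := mul_le_mul_of_nonneg_left b3.2 hAz
  have l3 := mul_le_mul_of_nonneg_left b3.1 hAz
  have u4 := mul_le_mul_of_nonneg_left b4.2 hA0
  have l4 := mul_le_mul_of_nonneg_left b4.1 hA0
  rw [abs_le]
  constructor <;> nlinarith
end
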